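/- Suppose (a_n)_{n≥1} are nonnegative reals with ∑ a_n x^n convergent for |x| < 1, and for some α, A ≥ 0 we have ∑_{n=1}^∞ a_n x^n ~ A/(1-x)^α as x ↑ 1. Then ∑_{k=1}^n a_k ~ (A/Γ(α+1))·n^α as n → ∞. -/

import Mathlib

open Filter Real

namespace HLT

/-- Karamata functional. -/
noncomputable def L (b : ℕ → ℝ) (α : ℝ) (g : ℝ → ℝ) (x : ℝ) : ℝ :=
  (1 - x) ^ α * ∑' n : ℕ, b n * x ^ (n+1) * g (x ^ (n+1))

/-- Limit functional. -/
noncomputable def Lam (α A : ℝ) (g : ℝ → ℝ) : ℝ :=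
  A / Real.Gamma α * ∫ t in Set.Ioi (0:ℝ), t ^ (α - 1) * exp (-t) * g (exp (-t))

lemma bdd {g : ℝ → ℝ} (hg : Continuous g) : ∃ C, ∀ u ∈ Set.Icc (0:ℝ) 1, |g u| ≤ C := by
  obtain ⟨C, hC⟩ := isCompact_Icc.exists_bound_of_continuousOn (s := Set.Icc (0:ℝ) 1) hg.continuousOn
  exact ⟨C, fun u hu => by simpa using hC u hu⟩

lemma pow_mem {x : ℝ} (h0 : 0 < x) (h1 : x < 1) (n : ℕ) : x ^ n ∈ Set.Icc (0:ℝ) 1 :=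
  ⟨by positivity, pow_le_one₀ h0.le h1.le⟩

lemma exp_mem {t : ℝ} (ht : t ∈ Set.Ioi (0:ℝ)) : exp (-t) ∈ Set.Icc (0:ℝ) 1 :=
  ⟨by positivity, by have : 0 < t := ht; simpa using this.le⟩

lemma summ {b : ℕ → ℝ} (hb : ∀ n, 0 ≤ b n) {x : ℝ} (h0 : 0 < x) (h1 : x < 1)
    (hs : Summable (fun n : ℕ => b n * x ^ (n+1))) {g : ℝ → ℝ} (hg : Continuous g) :
    Summable (fun n : ℕ => b n * x ^ (n+1) * g (x ^ (n+1))) := by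
  obtain ⟨C, hC⟩ := bdd hg
  refine Summable.of_norm_bounded (hs.mul_right C) (fun n => ?_)
  have : 0 ≤ b n * x ^ (n+1) := mul_nonneg (hb n) (by positivity)
  rw [norm_mul, Real.norm_of_nonneg this]
  exact mul_le_mul_of_nonneg_left (hC _ (pow_mem h0 h1 _)) this

lemma intg {α : ℝ} (hα : 0 < α) {g : ℝ → ℝ} (hg : Continuous g) :
    MeasureTheory.IntegrableOn (fun t => t ^ (α - 1) * exp (-t) * g (exp (-t))) (Set.Ioi (0:ℝ)) := by
  obtain ⟨C, hC⟩ := bdd hg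
  have h := Real.GammaIntegral_convergent hα
  have h' : MeasureTheory.IntegrableOn (fun t => t ^ (α - 1) * exp (-t)) (Set.Ioi (0:ℝ)) := by
    refine h.congr_fun (fun t _ => mul_comm _ _) measurableSet_Ioi
  refine MeasureTheory.Integrable.mul_bdd (c := C) h' ?_ ?_
  · exact (hg.comp (by fun_prop)).aestronglyMeasurable
  · filter_upwards [MeasureTheory.ae_restrict_mem measurableSet_Ioi] with t ht
    exact hC _ (exp_mem ht)

lemma L_mono {b : ℕ → ℝ} (hb : ∀ n, 0 ≤ b n) {x : ℝ} (h0 : 0 < x) (h1 : x < 1)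
    (hs : Summable (fun n : ℕ => b n * x ^ (n+1))) {α : ℝ} {g k : ℝ → ℝ} (hg : Continuous g)
    (hk : Continuous k) (h : ∀ u ∈ Set.Icc (0:ℝ) 1, g u ≤ k u) : L b α g x ≤ L b α k x := by
  unfold L
  have : 0 ≤ 1 - x := by linarith
  refine mul_le_mul_of_nonneg_left ?_ (by positivity)
  refine Summable.tsum_le_tsum (fun n => ?_) (summ hb h0 h1 hs hg) (summ hb h0 h1 hs hk)
  exact mul_le_mul_of_nonneg_left (h _ (pow_mem h0 h1 _)) (mul_nonneg (hb n) (by positivity))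

lemma Lam_mono {α A : ℝ} (hα : 0 < α) (hA : 0 < A) {g k : ℝ → ℝ} (hg : Continuous g)
    (hk : Continuous k) (h : ∀ u ∈ Set.Icc (0:ℝ) 1, g u ≤ k u) : Lam α A g ≤ Lam α A k := by
  unfold Lam
  have := Real.Gamma_pos_of_pos hα
  refine mul_le_mul_of_nonneg_left ?_ (by positivity)
  refine MeasureTheory.setIntegral_mono_on (intg hα hg) (intg hα hk) measurableSet_Ioi ?_
  intro t ht
  have ht' : 0 < t := ht
  exact mul_le_mul_of_nonneg_left (h _ (exp_mem ht)) (by positivity)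

lemma L_add {b : ℕ → ℝ} (hb : ∀ n, 0 ≤ b n) {x : ℝ} (h0 : 0 < x) (h1 : x < 1)
    (hs : Summable (fun n : ℕ => b n * x ^ (n+1))) {α : ℝ} {g k : ℝ → ℝ} (hg : Continuous g)
    (hk : Continuous k) : L b α (fun u => g u + k u) x = L b α g x + L b α k x := by
  unfold L
  rw [← mul_add, ← Summable.tsum_add (summ hb h0 h1 hs hg) (summ hb h0 h1 hs hk)]
  simp only [mul_add]

lemma Lam_add {α A : ℝ} (hα : 0 < α) {g k : ℝ → ℝ} (hg : Continuous g)
    (hk : Continuous k) : Lam α A (fun u => g u + k u) = Lam α A g + Lam α A k := by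
  unfold Lam
  rw [← mul_add, ← MeasureTheory.integral_add (intg hα hg) (intg hα hk)]
  simp only [mul_add]

lemma L_smul {b : ℕ → ℝ} {x α c : ℝ} {g : ℝ → ℝ} :
    L b α (fun u => c * g u) x = c * L b α g x := by
  unfold L
  rw [mul_left_comm c, ← tsum_mul_left (a := c)]
  congr 2; ext n; ring

lemma Lam_smul {α A c : ℝ} {g : ℝ → ℝ} :
    Lam α A (fun u => c * g u) = c * Lam α A g := by
  unfold Lam
  rw [mul_left_comm c, ← MeasureTheory.integral_const_mul c]
  congr 1
  refine MeasureTheory.integral_congr_ae (MeasureTheory.ae_of_all _ (fun n => ?_))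
  ring

lemma Lam_pow {α A : ℝ} (hα : 0 < α) (k : ℕ) :
    Lam α A (fun u => u ^ k) = A * (1 / ((k:ℝ) + 1)) ^ α := by
  unfold Lam
  have hk : (0:ℝ) < (k:ℝ) + 1 := by positivity
  have h := Real.integral_rpow_mul_exp_neg_mul_Ioi hα hk
  have : ∀ t : ℝ, t ^ (α - 1) * exp (-t) * exp (-t) ^ k = t ^ (α - 1) * exp (-(((k:ℝ)+1) * t)) := by
    intro t
    rw [mul_assoc, ← Real.exp_nat_mul, ← Real.exp_add]
    congr 2; ring
  simp only [this, h]
  have := (Real.Gamma_pos_of_pos hα).ne'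
  field_simp

lemma ev_mem : ∀ᶠ x in nhdsWithin (1:ℝ) (Set.Iio 1), 0 < x ∧ x < 1 := by
  filter_upwards [self_mem_nhdsWithin, mem_nhdsWithin_of_mem_nhds (Ioi_mem_nhds (zero_lt_one' ℝ))]
    with x hx hx'
  exact ⟨hx', hx⟩

lemma L_pow {b : ℕ → ℝ} {α A : ℝ} (hA : 0 < A)
    (hasymp : Tendsto (fun x : ℝ => (∑' n : ℕ, b n * x ^ (n+1)) / (A / (1-x) ^ α))
      (nhdsWithin 1 (Set.Iio 1)) (nhds 1)) (k : ℕ) :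
    Tendsto (L b α (fun u => u ^ k)) (nhdsWithin 1 (Set.Iio 1))
      (nhds (A * (1 / ((k:ℝ) + 1)) ^ α)) := by
  have hp : Tendsto (fun x : ℝ => x ^ (k+1)) (nhdsWithin 1 (Set.Iio 1)) (nhdsWithin 1 (Set.Iio 1)) := by
    refine tendsto_nhdsWithin_iff.2 ⟨?_, ?_⟩
    · have : Continuous (fun x : ℝ => x ^ (k+1)) := by fun_prop
      have := (this.tendsto 1).mono_left (nhdsWithin_le_nhds (s := Set.Iio 1))
      simpa using this
    · filter_upwards [ev_mem] with x hx
      exact pow_lt_one₀ hx.1.le hx.2 (by omega)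
  have hsum : Tendsto (fun x : ℝ => (1 / ∑ i ∈ Finset.range (k+1), x ^ i) ^ α)
      (nhdsWithin 1 (Set.Iio 1)) (nhds ((1 / ((k:ℝ) + 1)) ^ α)) := by
    have hk : (0:ℝ) < (k:ℝ) + 1 := by positivity
    have : Continuous (fun x : ℝ => ∑ i ∈ Finset.range (k+1), x ^ i) := by fun_prop
    have := (this.tendsto 1).mono_left (nhdsWithin_le_nhds (s := Set.Iio 1))
    simp only [one_pow, Finset.sum_const, Finset.card_range, nsmul_eq_mul, mul_one, Nat.cast_add,
      Nat.cast_one] at this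
    refine (tendsto_const_nhds.div this hk.ne').rpow_const (Or.inl ?_)
    positivity
  have := ((hasymp.comp hp).const_mul A).mul hsum
  rw [mul_one] at this
  refine this.congr' ?_
  filter_upwards [ev_mem] with x ⟨h0, h1⟩
  have hS : 0 < ∑ i ∈ Finset.range (k+1), x ^ i :=
    Finset.sum_pos (fun i _ => by positivity) ⟨0, by simp⟩
  have hgs : (1 - x) * ∑ i ∈ Finset.range (k+1), x ^ i = 1 - x ^ (k+1) := mul_neg_geom_sum x (k+1)
  have hx : 0 < 1 - x := by linarith
  simp only [Function.comp, L]
  rw [← hgs, Real.mul_rpow hx.le hS.le, Real.div_rpow zero_le_one hS.le, Real.one_rpow]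
  have e : (∑' n : ℕ, b n * (x ^ (k+1)) ^ (n+1)) = ∑' n : ℕ, b n * x ^ (n+1) * (x ^ (n+1)) ^ k := by
    congr 1; ext n; ring
  rw [e]
  have := (Real.rpow_pos_of_pos hS α).ne'
  have := (Real.rpow_pos_of_pos hx α).ne'
  field_simp

lemma L_poly {b : ℕ → ℝ} (hb : ∀ n, 0 ≤ b n) {α A : ℝ} (hα : 0 < α) (hA : 0 < A)
    (hs : ∀ x : ℝ, 0 < x → x < 1 → Summable (fun n : ℕ => b n * x ^ (n+1)))
    (hasymp : Tendsto (fun x : ℝ => (∑' n : ℕ, b n * x ^ (n+1)) / (A / (1-x) ^ α))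
      (nhdsWithin 1 (Set.Iio 1)) (nhds 1)) (p : Polynomial ℝ) :
    Tendsto (L b α (fun u => p.eval u)) (nhdsWithin 1 (Set.Iio 1))
      (nhds (Lam α A (fun u => p.eval u))) := by
  induction p using Polynomial.induction_on' with
  | add p q hp hq =>
    simp only [Polynomial.eval_add]
    rw [Lam_add hα p.continuous q.continuous]
    refine (hp.add hq).congr' ?_
    filter_upwards [ev_mem] with x ⟨h0, h1⟩
    rw [L_add hb h0 h1 (hs x h0 h1) p.continuous q.continuous]
  | monomial n c =>
    simp only [Polynomial.eval_monomial]
    rw [Lam_smul, Lam_pow hα]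
    refine ((L_pow hA hasymp n).const_mul c).congr (fun x => ?_)
    rw [L_smul]

lemma L_cont {b : ℕ → ℝ} (hb : ∀ n, 0 ≤ b n) {α A : ℝ} (hα : 0 < α) (hA : 0 < A)
    (hs : ∀ x : ℝ, 0 < x → x < 1 → Summable (fun n : ℕ => b n * x ^ (n+1)))
    (hasymp : Tendsto (fun x : ℝ => (∑' n : ℕ, b n * x ^ (n+1)) / (A / (1-x) ^ α))
      (nhdsWithin 1 (Set.Iio 1)) (nhds 1)) {g : ℝ → ℝ} (hg : Continuous g) :
    Tendsto (L b α g) (nhdsWithin 1 (Set.Iio 1)) (nhds (Lam α A g)) := by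
  have h1 : ∀ ε, Lam α A (fun _ => ε) = ε * A := by
    intro ε
    have := Lam_smul (α := α) (A := A) (c := ε) (g := fun u => u ^ 0)
    rw [Lam_pow hα] at this
    simpa using this
  have key : ∀ ε > 0, ∃ p : Polynomial ℝ, (∀ u ∈ Set.Icc (0:ℝ) 1, g u ≤ p.eval u) ∧
      (∀ u ∈ Set.Icc (0:ℝ) 1, p.eval u ≤ g u + ε) := by
    intro ε hε
    obtain ⟨p, hp⟩ := exists_polynomial_near_of_continuousOn 0 1 (fun u => g u + ε/2)
      (by fun_prop) (ε/2) (by positivity)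
    refine ⟨p, fun u hu => ?_, fun u hu => ?_⟩ <;>
    · have := abs_lt.1 (hp u hu)
      linarith [this.1, this.2]
  have key2 : ∀ ε > 0, ∃ p : Polynomial ℝ, (∀ u ∈ Set.Icc (0:ℝ) 1, p.eval u ≤ g u) ∧
      (∀ u ∈ Set.Icc (0:ℝ) 1, g u ≤ p.eval u + ε) := by
    intro ε hε
    obtain ⟨p, hp⟩ := exists_polynomial_near_of_continuousOn 0 1 (fun u => g u - ε/2)
      (by fun_prop) (ε/2) (by positivity)
    refine ⟨p, fun u hu => ?_, fun u hu => ?_⟩ <;>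
    · have := abs_lt.1 (hp u hu)
      linarith [this.1, this.2]
  refine tendsto_order.2 ⟨fun c hc => ?_, fun c hc => ?_⟩
  · obtain ⟨p, hp1, hp2⟩ := key2 ((Lam α A g - c) / (2 * A)) (by have := sub_pos.2 hc; positivity)
    have hL := Lam_mono hα hA hg (k := fun u => p.eval u + (Lam α A g - c) / (2 * A))
      (by fun_prop) hp2
    rw [Lam_add hα p.continuous continuous_const, h1] at hL
    have e : (Lam α A g - c) / (2 * A) * A = (Lam α A g - c) / 2 := by field_simp
    rw [e] at hL
    filter_upwards [ev_mem, (tendsto_order.1 (L_poly hb hα hA hs hasymp p)).1 c (by linarith)]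
      with x ⟨h0, h1⟩ hx
    exact hx.trans_le (L_mono hb h0 h1 (hs x h0 h1) p.continuous hg hp1)
  · obtain ⟨p, hp1, hp2⟩ := key ((c - Lam α A g) / (2 * A)) (by have := sub_pos.2 hc; positivity)
    have hL := Lam_mono hα hA p.continuous (k := fun u => g u + (c - Lam α A g) / (2 * A))
      (by fun_prop) hp2
    rw [Lam_add hα hg continuous_const, h1] at hL
    have e : (c - Lam α A g) / (2 * A) * A = (c - Lam α A g) / 2 := by field_simp
    rw [e] at hL
    filter_upwards [ev_mem, (tendsto_order.1 (L_poly hb hα hA hs hasymp p)).2 c (by linarith)]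
      with x ⟨h0, h1⟩ hx
    exact (L_mono hb h0 h1 (hs x h0 h1) hg p.continuous hp1).trans_lt hx

lemma exists_g {p q : ℝ} (hpq : p < q) : ∃ g : ℝ → ℝ, Continuous g ∧
    (∀ u, 0 < u → 0 ≤ u * g u) ∧ (∀ u, 0 < u → u * g u ≤ 1) ∧ (∀ u, exp (-p) ≤ u → u * g u = 1) ∧
    (∀ u, u ≤ exp (-q) → g u = 0) := by
  have hlt : exp (-q) < exp (-p) := by simpa using hpq
  have hd : 0 < exp (-p) - exp (-q) := by linarith
  have hm : ∀ u, 0 < max u (exp (-q)) := fun u => lt_max_of_lt_right (exp_pos _)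
  refine ⟨fun u => max 0 (min 1 ((u - exp (-q)) / (exp (-p) - exp (-q)))) / max u (exp (-q)),
    ?_, ?_, ?_, ?_, ?_⟩
  · exact Continuous.div (by fun_prop) (by fun_prop) (fun u => (hm u).ne')
  · intro u hu
    have := hm u
    have : 0 ≤ max 0 (min 1 ((u - exp (-q)) / (exp (-p) - exp (-q)))) := le_max_left _ _
    positivity
  · intro u hu
    rw [mul_div_assoc', div_le_one (hm u)]
    have h1 : max 0 (min 1 ((u - exp (-q)) / (exp (-p) - exp (-q)))) ≤ 1 :=
      max_le zero_le_one (min_le_left _ _)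
    exact (mul_le_of_le_one_right hu.le h1).trans (le_max_left _ _)
  · intro u hu
    have hu0 : 0 < u := (exp_pos _).trans_le hu
    have h1 : 1 ≤ (u - exp (-q)) / (exp (-p) - exp (-q)) := by
      rw [le_div_iff₀ hd]; linarith
    simp only [min_eq_left h1, max_eq_right zero_le_one, max_eq_left (hlt.le.trans hu)]
    field_simp
  · intro u hu
    have h1 : (u - exp (-q)) / (exp (-p) - exp (-q)) ≤ 0 :=
      div_nonpos_of_nonpos_of_nonneg (by linarith) hd.le
    simp [min_eq_right (h1.trans zero_le_one), max_eq_left h1]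

lemma int_pow {α q : ℝ} (hα : 0 < α) (hq : 0 < q) :
    MeasureTheory.IntegrableOn (fun t : ℝ => t ^ (α - 1)) (Set.Ioc 0 q) ∧
    ∫ t in Set.Ioc (0:ℝ) q, t ^ (α - 1) = q ^ α / α := by
  constructor
  · exact (intervalIntegrable_iff_integrableOn_Ioc_of_le hq.le).1
      (intervalIntegral.intervalIntegrable_rpow' (by linarith))
  · rw [← intervalIntegral.integral_of_le hq.le, integral_rpow (Or.inl (by linarith))]
    simp [Real.zero_rpow hα.ne']

lemma coef {α A q : ℝ} (hα : 0 < α) :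
    A / Real.Gamma α * (q ^ α / α) = A / Real.Gamma (α + 1) * q ^ α := by
  have := (Real.Gamma_pos_of_pos hα).ne'
  rw [Real.Gamma_add_one hα.ne']
  field_simp

lemma Lam_le {α A q : ℝ} (hα : 0 < α) (hA : 0 < A) (hq : 0 < q) {g : ℝ → ℝ} (hg : Continuous g)
    (h1 : ∀ u, 0 < u → u * g u ≤ 1) (h2 : ∀ u, u ≤ exp (-q) → g u = 0) :
    Lam α A g ≤ A / Real.Gamma (α + 1) * q ^ α := by
  have := Real.Gamma_pos_of_pos hα
  rw [← coef hα]
  unfold Lam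
  refine mul_le_mul_of_nonneg_left ?_ (by positivity)
  rw [← (int_pow hα hq).2]
  rw [MeasureTheory.setIntegral_eq_of_subset_of_forall_sdiff_eq_zero measurableSet_Ioi
    (s := Set.Ioc 0 q) Set.Ioc_subset_Ioi_self]
  · refine MeasureTheory.setIntegral_mono_on ((intg hα hg).mono_set Set.Ioc_subset_Ioi_self)
      (int_pow hα hq).1 measurableSet_Ioc ?_
    intro t ht
    have ht0 : 0 < t := ht.1
    rw [mul_assoc]
    exact mul_le_of_le_one_right (by positivity) (h1 _ (exp_pos _))
  · intro t ht
    rw [h2, mul_zero]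
    have : q < t := by
      by_contra h
      exact ht.2 ⟨ht.1, not_lt.1 h⟩
    simpa using this.le

lemma le_Lam {α A p : ℝ} (hα : 0 < α) (hA : 0 < A) (hp : 0 < p) {g : ℝ → ℝ} (hg : Continuous g)
    (h1 : ∀ u, 0 < u → 0 ≤ u * g u) (h2 : ∀ u, exp (-p) ≤ u → u * g u = 1) :
    A / Real.Gamma (α + 1) * p ^ α ≤ Lam α A g := by
  have := Real.Gamma_pos_of_pos hα
  rw [← coef hα]
  unfold Lam
  refine mul_le_mul_of_nonneg_left ?_ (by positivity)
  rw [← (int_pow hα hp).2]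
  have e : ∫ t in Set.Ioc (0:ℝ) p, t ^ (α - 1) =
      ∫ t in Set.Ioc (0:ℝ) p, t ^ (α - 1) * exp (-t) * g (exp (-t)) := by
    refine MeasureTheory.setIntegral_congr_fun measurableSet_Ioc (fun t ht => ?_)
    rw [mul_assoc, h2 _ (by simpa using ht.2), mul_one]
  rw [e]
  refine MeasureTheory.setIntegral_mono_set (intg hα hg) ?_ Set.Ioc_subset_Ioi_self.eventuallyLE
  filter_upwards [MeasureTheory.ae_restrict_mem measurableSet_Ioi] with t ht
  have ht0 : 0 < t := ht
  have := h1 _ (exp_pos (-t))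
  simp only [Pi.zero_apply]
  rw [mul_assoc]
  positivity

lemma xn_pow {n : ℕ} (k : ℕ) : exp (-(1/(n:ℝ))) ^ k = exp (-(k/n)) := by
  rw [← Real.exp_nat_mul]; congr 1; ring

lemma xn_tendsto : Tendsto (fun n : ℕ => exp (-(1/(n:ℝ)))) atTop (nhdsWithin 1 (Set.Iio 1)) := by
  refine tendsto_nhdsWithin_iff.2 ⟨?_, ?_⟩
  · have := (Real.continuous_exp.tendsto _).comp (tendsto_one_div_atTop_nhds_zero_nat (𝕜 := ℝ)).neg
    simpa [Function.comp_def] using this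
  · filter_upwards [eventually_ge_atTop 1] with n hn
    have : (0:ℝ) < n := by exact_mod_cast hn
    simpa using this

lemma main_pos {b : ℕ → ℝ} (hb : ∀ n, 0 ≤ b n) {α A : ℝ} (hα : 0 < α) (hA : 0 < A)
    (hs : ∀ x : ℝ, 0 < x → x < 1 → Summable (fun n : ℕ => b n * x ^ (n+1)))
    (hasymp : Tendsto (fun x : ℝ => (∑' n : ℕ, b n * x ^ (n+1)) / (A / (1-x) ^ α))
      (nhdsWithin 1 (Set.Iio 1)) (nhds 1)) :
    Tendsto (fun n : ℕ => (1 - exp (-(1/(n:ℝ)))) ^ α * ∑ k ∈ Finset.range n, b k) atTop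
      (nhds (A / Real.Gamma (α + 1))) := by
  have hG := Real.Gamma_pos_of_pos (show 0 < α + 1 by linarith)
  have hcont : Tendsto (fun q : ℝ => A / Real.Gamma (α + 1) * q ^ α) (nhds 1)
      (nhds (A / Real.Gamma (α + 1))) := by
    have := ((Real.continuousAt_rpow_const 1 α (Or.inl one_ne_zero)).tendsto).const_mul
      (A / Real.Gamma (α + 1))
    simpa using this
  have hev : ∀ᶠ n : ℕ in atTop, 0 < exp (-(1/(n:ℝ))) ∧ exp (-(1/(n:ℝ))) < 1 :=
    xn_tendsto.eventually ev_mem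
  refine tendsto_order.2 ⟨fun c hc => ?_, fun c hc => ?_⟩
  · have hev1 : ∀ᶠ q in nhdsWithin (1:ℝ) (Set.Iio 1), c < A / Real.Gamma (α + 1) * q ^ α :=
      mem_nhdsWithin_of_mem_nhds ((tendsto_order.1 hcont).1 c hc)
    obtain ⟨p, hp, hp0, hp1⟩ := (hev1.and ev_mem).exists
    obtain ⟨g, hg, g0, g1, gp, gq⟩ := exists_g hp1
    have hl := (L_cont hb hα hA hs hasymp hg).comp xn_tendsto
    filter_upwards [hev, eventually_ge_atTop 1,
      (tendsto_order.1 hl).1 c (hp.trans_le (le_Lam hα hA hp0 hg g0 gp))] with n ⟨h0, h1⟩ hn hx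
    have hn0 : (0:ℝ) < n := by exact_mod_cast hn
    refine hx.trans_le ?_
    simp only [Function.comp, L]
    have : 0 ≤ 1 - exp (-(1/(n:ℝ))) := by linarith
    refine mul_le_mul_of_nonneg_left ?_ (by positivity)
    rw [tsum_eq_sum (s := Finset.range n)]
    · refine Finset.sum_le_sum (fun i _ => ?_)
      rw [mul_assoc]
      exact mul_le_of_le_one_right (hb i) (g1 _ (by positivity))
    · intro i hi
      rw [gq, mul_zero]
      rw [xn_pow, Real.exp_le_exp, neg_le_neg_iff, one_le_div hn0]
      have : n ≤ i + 1 := by simp at hi; omega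
      exact_mod_cast this
  · have hev1 : ∀ᶠ q in nhdsWithin (1:ℝ) (Set.Ioi 1), A / Real.Gamma (α + 1) * q ^ α < c :=
      mem_nhdsWithin_of_mem_nhds ((tendsto_order.1 hcont).2 c hc)
    obtain ⟨q, hq, hq1⟩ := (hev1.and self_mem_nhdsWithin).exists
    have hq1 : 1 < q := hq1
    obtain ⟨g, hg, g0, g1, gp, gq⟩ := exists_g hq1
    have hl := (L_cont hb hα hA hs hasymp hg).comp xn_tendsto
    filter_upwards [hev, eventually_ge_atTop 1,
      (tendsto_order.1 hl).2 c ((Lam_le hα hA (by linarith) hg g1 gq).trans_lt hq)]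
      with n ⟨h0, h1⟩ hn hx
    have hn0 : (0:ℝ) < n := by exact_mod_cast hn
    refine lt_of_le_of_lt ?_ hx
    simp only [Function.comp, L]
    have : 0 ≤ 1 - exp (-(1/(n:ℝ))) := by linarith
    refine mul_le_mul_of_nonneg_left ?_ (by positivity)
    refine le_trans (Finset.sum_le_sum (fun i hi => ?_))
      (Summable.sum_le_tsum (Finset.range n) (fun i _ => ?_) (summ hb h0 h1 (hs _ h0 h1) hg))
    · rw [mul_assoc, gp, mul_one]
      rw [xn_pow, Real.exp_le_exp, neg_le_neg_iff, div_le_one hn0]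
      have : i + 1 ≤ n := by simp at hi; omega
      exact_mod_cast this
    · rw [mul_assoc]
      exact mul_nonneg (hb i) (g0 _ (by positivity))

lemma xn_asymp : Tendsto (fun n : ℕ => (1 - exp (-(1/(n:ℝ)))) * n) atTop (nhds 1) := by
  have hd : HasDerivAt (fun t : ℝ => 1 - exp (-t)) 1 0 := by
    have := ((hasDerivAt_neg (0:ℝ)).exp).const_sub 1
    simpa using this
  have h := hd.tendsto_slope_zero_right
  have h2 : Tendsto (fun n : ℕ => 1/(n:ℝ)) atTop (nhdsWithin 0 (Set.Ioi 0)) := by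
    refine tendsto_nhdsWithin_iff.2 ⟨tendsto_one_div_atTop_nhds_zero_nat, ?_⟩
    filter_upwards [eventually_ge_atTop 1] with n hn
    have : (0:ℝ) < n := by exact_mod_cast hn
    simpa using this
  refine (h.comp h2).congr (fun n => ?_)
  simp [mul_comm]

lemma main_zero {b : ℕ → ℝ} (hb : ∀ n, 0 ≤ b n) {A : ℝ}
    (hs : ∀ x : ℝ, 0 < x → x < 1 → Summable (fun n : ℕ => b n * x ^ (n+1)))
    (h : Tendsto (fun x : ℝ => (∑' n : ℕ, b n * x ^ (n+1)))
      (nhdsWithin 1 (Set.Iio 1)) (nhds A)) :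
    Tendsto (fun n : ℕ => ∑ k ∈ Finset.range n, b k) atTop (nhds A) := by
  have hle : ∀ n, ∑ k ∈ Finset.range n, b k ≤ A := by
    intro n
    have hc : Continuous (fun x : ℝ => ∑ k ∈ Finset.range n, b k * x ^ (k+1)) := by fun_prop
    have hc := (hc.tendsto 1).mono_left (nhdsWithin_le_nhds (s := Set.Iio 1))
    simp only [one_pow, mul_one] at hc
    refine le_of_tendsto_of_tendsto hc h ?_
    filter_upwards [ev_mem] with x ⟨h0, h1⟩
    exact Summable.sum_le_tsum _ (fun i _ => mul_nonneg (hb i) (by positivity)) (hs x h0 h1)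
  have hsum : Summable b := summable_of_sum_range_le hb hle
  have ht := hsum.hasSum.tendsto_sum_nat
  have habel := Real.tendsto_tsum_powerSeries_nhdsWithin_lt ht
  have hid : Tendsto (fun x : ℝ => x) (nhdsWithin 1 (Set.Iio 1)) (nhds 1) :=
    tendsto_id.mono_left nhdsWithin_le_nhds
  have := hid.mul habel
  rw [one_mul] at this
  have h3 : Tendsto (fun x : ℝ => (∑' n : ℕ, b n * x ^ (n+1)))
      (nhdsWithin 1 (Set.Iio 1)) (nhds (∑' n, b n)) := by
    refine this.congr (fun x => ?_)
    rw [← tsum_mul_left]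
    congr 1; ext n; ring
  rwa [tendsto_nhds_unique h h3]

end HLT

theorem hardy_littlewood_tauberian (a : ℕ → ℝ) (hpos : ∀ n, 1 ≤ n → 0 ≤ a n)
    (hconv : ∀ x : ℝ, |x| < 1 → Summable (fun n : ℕ => a (n+1) * x ^ (n+1)))
    (α A : ℝ) (hα : 0 ≤ α) (hA : 0 ≤ A)
    (hasymp : Tendsto (fun x : ℝ => (∑' n : ℕ, a (n+1) * x ^ (n+1)) / (A / (1-x) ^ α))
      (nhdsWithin 1 (Set.Iio 1)) (nhds 1)) :
    Tendsto (fun n : ℕ => (∑ k ∈ Finset.Icc 1 n, a k) / (A / Real.Gamma (α+1) * (n:ℝ) ^ α))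
      atTop (nhds 1) := by
  have hb : ∀ n, 0 ≤ a (n+1) := fun n => hpos _ (by omega)
  have hs : ∀ x : ℝ, 0 < x → x < 1 → Summable (fun n : ℕ => a (n+1) * x ^ (n+1)) :=
    fun x h0 h1 => hconv x (by rw [abs_of_pos h0]; exact h1)
  have hS : ∀ n, ∑ k ∈ Finset.Icc 1 n, a k = ∑ k ∈ Finset.range n, a (k+1) := by
    intro n
    rw [Finset.range_eq_Ico, Finset.sum_Ico_add' a 0 n 1]
    rfl
  rcases hA.eq_or_lt with rfl | hA
  · simp only [zero_div, div_zero] at hasymp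
    exact absurd (tendsto_nhds_unique hasymp tendsto_const_nhds) one_ne_zero
  simp only [hS]
  rcases hα.eq_or_lt with rfl | hα
  · simp only [Real.rpow_zero, div_one, zero_add, Real.Gamma_one, mul_one] at hasymp ⊢
    have h1 := hasymp.mul_const A
    simp only [one_mul, div_mul_cancel₀ _ hA.ne'] at h1
    have := (HLT.main_zero (b := fun n => a (n+1)) hb hs h1).div_const A
    rwa [div_self hA.ne'] at this
  · have h1 := HLT.main_pos (b := fun n => a (n+1)) hb hα hA hs hasymp
    have h2 := HLT.xn_asymp.rpow_const (p := α) (Or.inl one_ne_zero)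
    have hG := Real.Gamma_pos_of_pos (show 0 < α + 1 by linarith)
    have hB : 0 < A / Real.Gamma (α + 1) := by positivity
    have h3 := (h1.div_const (A / Real.Gamma (α + 1))).div h2 (by simp)
    rw [div_self hB.ne', Real.one_rpow, div_one] at h3
    refine h3.congr' ?_
    filter_upwards [eventually_ge_atTop 1, HLT.xn_tendsto.eventually HLT.ev_mem] with n hn hx
    have hn0 : (0:ℝ) < n := by exact_mod_cast hn
    have hx1 : 0 < 1 - exp (-(1/(n:ℝ))) := by linarith [hx.2]
    simp only [Pi.div_apply]
    rw [Real.mul_rpow hx1.le hn0.le]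
    have := (Real.rpow_pos_of_pos hx1 α).ne'
    have := (Real.rpow_pos_of_pos hn0 α).ne'
    generalize (1 - exp (-(1/(n:ℝ)))) ^ α = X at *
    generalize (n:ℝ) ^ α = Y at *
    field_simp
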